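/- For a unit vector v ∈ ℝ^d let h_v(r) = r^{-2}⟨v,Av⟩ + ∫_{ℝ^d} min(1, ⟨v,z⟩²/r²) ν(dz) for r > 0 (the concentration function of the projection of the process onto the line spanned by v). Then condition (C3) holds if and only if the following condition (C8) holds: there exist T₈ ∈ (0,∞], c₈ ∈ [1,∞) and α₈ ∈ (0,2] such that for every unit vector v and all 0 < r < T₈ one has h(r) ≤ c₈ h_v(r), and moreover h(r) ≤ c₈ λ^{α₈} h(λr) for all λ ≤ 1 and 0 < r < T₈. -/

import Mathlib

/-!
The key is a two-sided comparison between `Re ψ` and the concentration functions, with constants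
depending only on `d`. Throughout, radii are inverted: `concInv ρ = h(1/ρ)`, and `projConc x` is
`h_v(r)` for `x = v / r`.

From above, `1 - cos t ≤ 2 min(1, t²)` gives `Re ψ(x) ≤ 2 h_v(1/|x|)` (`rePsi_le_projConc`) and so
`ψ*(ρ) ≤ 2 h(1/ρ)` (`psiStar_le_concInv`). From below, `1 - cos` has zeros, but its average over
dilations satisfies `∫₀¹ (1 - cos(s t)) ds ≥ min(1, t²) / 15`; integrating against `ν` and using
Fubini bounds `h_v(1/ρ)` by `16 ψ*(ρ)` (`projConc_le_psiStar`). Summing over the coordinate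
directions, with the operator norm of `A` bounded by its trace, yields `h(1/ρ) ≤ 16 d ψ*(ρ)`
(`concInv_le_psiStar`).

Thus `ψ*(ρ)` and `h(1/ρ)` are comparable, so their scaling conditions are equivalent, and (C3)
gives `h(r) ≤ C ψ*(1/r) ≤ C' Re ψ(v/r) ≤ 2 C' h_v(r)`. For the converse pointwise lower bound on
`Re ψ`, one has `h_v(r/M) ≤ 5 M² Re ψ(v/r) + h_v(r)` for every `M ≥ 1` (`projConc_smul_le`). The
functions `h_v` inherit the scaling of `h` uniformly in `v`, so `h_v(r) ≤ h_v(r/M) / 2` for a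
suitable fixed `M`; the last term is then absorbed, leaving `h_v(r) ≤ 5 M² Re ψ(v/r)`.
-/

open MeasureTheory Filter Set
open scoped RealInnerProductSpace ENNReal Topology

noncomputable section

abbrev Ed (d : ℕ) := EuclideanSpace ℝ (Fin d)

/-- The concentration function `h`. -/
def concFn (d : ℕ) (A : Ed d →L[ℝ] Ed d) (ν : Measure (Ed d)) (r : ℝ) : ℝ :=
  ‖A‖ / r ^ 2 + ∫ z, min 1 (‖z‖ ^ 2 / r ^ 2) ∂ν

/-- The function `K`. -/
def KFn (d : ℕ) (A : Ed d →L[ℝ] Ed d) (ν : Measure (Ed d)) (r : ℝ) : ℝ :=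
  ‖A‖ / r ^ 2 + (∫ z in {z : Ed d | ‖z‖ < r}, ‖z‖ ^ 2 ∂ν) / r ^ 2

/-- Context hypotheses on the pair `(A, ν)`. -/
structure IsLevyPair (d : ℕ) (A : Ed d →L[ℝ] Ed d) (ν : Measure (Ed d)) : Prop where
  symm : ∀ x y : Ed d, ⟪A x, y⟫ = ⟪x, A y⟫
  nonneg : ∀ x : Ed d, 0 ≤ ⟪x, A x⟫
  nu_zero : ν ({0} : Set (Ed d)) = 0
  nu_int : Integrable (fun z : Ed d => min 1 (‖z‖ ^ 2)) ν
  h_lim : Tendsto (concFn d A ν) (𝓝[>] (0 : ℝ)) atTop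

/-- `g` is the (two-sided) inverse of `f` on `(0,∞)`. -/
structure IsInvOn (f g : ℝ → ℝ) : Prop where
  pos : ∀ u : ℝ, 0 < u → 0 < g u
  right_inv : ∀ u : ℝ, 0 < u → f (g u) = u
  left_inv : ∀ r : ℝ, 0 < r → g (f r) = r

/-- Real part of the characteristic exponent. -/
def rePsi (d : ℕ) (A : Ed d →L[ℝ] Ed d) (ν : Measure (Ed d)) (x : Ed d) : ℝ :=
  ⟪x, A x⟫ + ∫ z, (1 - Real.cos ⟪x, z⟫) ∂ν

/-- The radial non-decreasing majorant ψ*. -/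
def psiStar (d : ℕ) (A : Ed d →L[ℝ] Ed d) (ν : Measure (Ed d)) (r : ℝ) : ℝ :=
  sSup (rePsi d A ν '' Metric.closedBall 0 r)

/-- Condition (C3). -/
def CondC3 (d : ℕ) (A : Ed d →L[ℝ] Ed d) (ν : Measure (Ed d)) (T : ℝ≥0∞) (c α : ℝ) :
    Prop :=
  (∀ x : Ed d, 1 / T < ENNReal.ofReal ‖x‖ → c * psiStar d A ν ‖x‖ ≤ rePsi d A ν x) ∧
    ∀ lam r : ℝ, 1 ≤ lam → 0 < r → 1 / T < ENNReal.ofReal r →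
      c * lam ^ α * psiStar d A ν r ≤ psiStar d A ν (lam * r)

/-- Condition (A1): weak lower scaling of `h` at zero. -/
def ScalA1 (h : ℝ → ℝ) (α C : ℝ) (θ : ℝ≥0∞) : Prop :=
  ∀ lam r : ℝ, 0 < lam → lam ≤ 1 → 0 < r → ENNReal.ofReal r < θ →
    h r ≤ C * lam ^ α * h (lam * r)

/-- The shifted drift `b_r`. -/
def bshift (d : ℕ) (ν : Measure (Ed d)) (b : Ed d) (r : ℝ) : Ed d :=
  b + ∫ z, (Set.indicator {w : Ed d | ‖w‖ < r} (fun w => w) z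
      - Set.indicator {w : Ed d | ‖w‖ < 1} (fun w => w) z) ∂ν

/-- The characteristic exponent of the triplet `(A, ν, b)`. -/
def psiFn (d : ℕ) (A : Ed d →L[ℝ] Ed d) (ν : Measure (Ed d)) (b : Ed d) (x : Ed d) : ℂ :=
  ((⟪x, A x⟫ : ℝ) : ℂ) - Complex.I * ((⟪x, b⟫ : ℝ) : ℂ) -
    ∫ z, (Complex.exp (Complex.I * ((⟪x, z⟫ : ℝ) : ℂ)) - 1 -
      Complex.I * ((⟪x, z⟫ : ℝ) : ℂ)
        * Set.indicator {w : Ed d | ‖w‖ < 1} (fun _ => (1 : ℂ)) z) ∂ν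

/-- The transition density, defined by Fourier inversion. -/
def pdens (d : ℕ) (A : Ed d →L[ℝ] Ed d) (ν : Measure (Ed d)) (b : Ed d)
    (t : ℝ) (x : Ed d) : ℝ :=
  ((2 * Real.pi) ^ d)⁻¹ *
    (∫ z : Ed d, Complex.exp (-(Complex.I * ((⟪x, z⟫ : ℝ) : ℂ))
        - (t : ℂ) * psiFn d A ν b z)).re


/-! ### Concentration functions in inverse radii -/

/-- The concentration function in terms of the inverse radius: `concInv ρ = h(1/ρ)` for `ρ > 0`,
written without division. -/
def concInv (d : ℕ) (A : Ed d →L[ℝ] Ed d) (ν : Measure (Ed d)) (ρ : ℝ) : ℝ :=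
  ‖A‖ * ρ ^ 2 + ∫ z, min 1 (ρ ^ 2 * ‖z‖ ^ 2) ∂ν

/-- The projected concentration function `h_v(r)` as a function of the single vector `x = v / r`. -/
def projConc (d : ℕ) (A : Ed d →L[ℝ] Ed d) (ν : Measure (Ed d)) (x : Ed d) : ℝ :=
  ⟪x, A x⟫ + ∫ z, min 1 (⟪x, z⟫ ^ 2) ∂ν

lemma concFn_eq_concInv (d : ℕ) (A : Ed d →L[ℝ] Ed d) (ν : Measure (Ed d)) (r : ℝ) :
    concFn d A ν r = concInv d A ν r⁻¹ := by
  simp only [concFn, concInv, div_eq_mul_inv, inv_pow, mul_comm]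

lemma projConc_smul (d : ℕ) (A : Ed d →L[ℝ] Ed d) (ν : Measure (Ed d)) (v : Ed d) (r : ℝ) :
    ⟪v, A v⟫ / r ^ 2 + ∫ z, min 1 (⟪v, z⟫ ^ 2 / r ^ 2) ∂ν = projConc d A ν (r⁻¹ • v) := by
  simp only [projConc, map_smul, real_inner_smul_left, real_inner_smul_right, mul_pow, inv_pow,
    div_eq_mul_inv]
  congr 1
  · ring
  · simp only [mul_comm]

/-! ### Elementary inequalities -/

lemma min_one_mul_le {C : ℝ} (hC : 1 ≤ C) (a : ℝ) : min 1 (C * a) ≤ C * min 1 a := by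
  rcases le_total 1 a with h | h
  · rw [min_eq_left h]; exact (min_le_left _ _).trans (by linarith)
  · rw [min_eq_right h]; exact min_le_right _ _

lemma min_one_sum_le {ι : Type*} (s : Finset ι) (f : ι → ℝ) (hf : ∀ i, 0 ≤ f i) :
    min 1 (∑ i ∈ s, f i) ≤ ∑ i ∈ s, min 1 (f i) := by
  classical
  induction s using Finset.induction_on with
  | empty => simp
  | insert i s hi ih =>
    rw [Finset.sum_insert hi, Finset.sum_insert hi]
    have h1 : 0 ≤ ∑ i ∈ s, f i := Finset.sum_nonneg fun i _ => hf i
    have h2 := hf i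
    refine le_trans ?_ (add_le_add_right ih _)
    rcases le_total 1 (f i) with h | h <;> rcases le_total 1 (∑ i ∈ s, f i) with h' | h' <;>
      simp only [min_eq_left h, min_eq_right h, min_eq_left h', min_eq_right h'] <;>
      first
        | exact (min_le_left _ _).trans (by linarith)
        | exact min_le_right _ _

lemma one_sub_cos_le (t : ℝ) : 1 - Real.cos t ≤ 2 * min 1 (t ^ 2) := by
  have h1 := Real.one_sub_sq_div_two_le_cos (x := t)
  have h2 := Real.neg_one_le_cos t
  rcases le_total 1 (t ^ 2) with h | h
  · rw [min_eq_left h]; linarith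
  · rw [min_eq_right h]; nlinarith

lemma sq_div_five_le {t : ℝ} (ht : |t| ≤ 3) : t ^ 2 / 5 ≤ 1 - Real.cos t := by
  have hpi := Real.pi_gt_three
  have hpi' := Real.pi_lt_d2
  have h := Real.cos_le_one_sub_mul_cos_sq (x := t) (by linarith)
  have h2 : (1 : ℝ) / 5 ≤ 2 / Real.pi ^ 2 := by
    rw [div_le_div_iff₀ (by norm_num) (by positivity)]; nlinarith
  nlinarith [sq_nonneg t]

lemma min_one_scaled_le {M : ℝ} (hM : 1 ≤ M) (t : ℝ) :
    min 1 ((M * t) ^ 2) ≤ 5 * M ^ 2 * (1 - Real.cos t) + min 1 (t ^ 2) := by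
  have h0 : 0 ≤ 1 - Real.cos t := by linarith [Real.cos_le_one t]
  rcases le_total 1 (t ^ 2) with h | h
  · rw [min_eq_left h]
    have : 0 ≤ 5 * M ^ 2 * (1 - Real.cos t) := by positivity
    linarith [min_le_left 1 ((M * t) ^ 2)]
  · have ht : |t| ≤ 1 := by rwa [← sq_le_one_iff_abs_le_one]
    have h2 := sq_div_five_le (t := t) (by linarith)
    have h3 : 0 ≤ min 1 (t ^ 2) := by positivity
    have h4 : (M * t) ^ 2 ≤ 5 * M ^ 2 * (1 - Real.cos t) := by
      nlinarith [sq_nonneg M]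
    linarith [min_le_right 1 ((M * t) ^ 2)]

/-- Averaging over the dilation parameter removes the zeros of `1 - cos` away from the origin. -/
lemma min_one_le_average (t : ℝ) :
    min 1 (t ^ 2) ≤ 15 * ∫ s in (0 : ℝ)..1, (1 - Real.cos (s * t)) := by
  rcases le_total |t| 3 with h | h
  · have h1 : ∫ s in (0 : ℝ)..1, s ^ 2 * (t ^ 2 / 5) ≤
        ∫ s in (0 : ℝ)..1, (1 - Real.cos (s * t)) := by
      apply intervalIntegral.integral_mono_on (by norm_num)
      · exact Continuous.intervalIntegrable (by fun_prop) _ _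
      · exact Continuous.intervalIntegrable (by fun_prop) _ _
      · intro s hs
        have := sq_div_five_le (t := s * t) (by
          rw [abs_mul, abs_of_nonneg hs.1]
          nlinarith [abs_nonneg t, hs.1, hs.2])
        linarith [mul_pow s t 2]
    rw [intervalIntegral.integral_mul_const, integral_pow] at h1
    norm_num at h1
    linarith [min_le_right 1 (t ^ 2)]
  · have ht : t ≠ 0 := by rintro rfl; norm_num at h
    have h1 : ∫ s in (0 : ℝ)..1, (1 - Real.cos (s * t)) = 1 - t⁻¹ * Real.sin t := by
      rw [intervalIntegral.integral_sub (Continuous.intervalIntegrable (by fun_prop) _ _)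
        (Continuous.intervalIntegrable (by fun_prop) _ _),
        intervalIntegral.integral_comp_mul_right _ ht]
      simp
    have h2 : |t⁻¹ * Real.sin t| ≤ 1 / 3 := by
      rw [abs_mul, abs_inv, inv_mul_eq_div, div_le_div_iff₀ (by linarith) (by norm_num)]
      linarith [Real.abs_sin_le_one t]
    rw [h1]
    linarith [min_le_left 1 (t ^ 2), le_abs_self (t⁻¹ * Real.sin t)]

section Levy

variable {d : ℕ} {A : Ed d →L[ℝ] Ed d} {ν : Measure (Ed d)}

/-! ### Integrability -/

lemma integrable_min_norm (hp : IsLevyPair d A ν) (ρ : ℝ) :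
    Integrable (fun z : Ed d => min 1 (ρ ^ 2 * ‖z‖ ^ 2)) ν := by
  refine (hp.nu_int.const_mul (1 + ρ ^ 2)).mono' (by fun_prop) (ae_of_all _ fun z => ?_)
  rw [Real.norm_of_nonneg (by positivity)]
  refine le_trans (min_le_min_left 1 ?_)
    (min_one_mul_le (by nlinarith [sq_nonneg ρ]) _)
  gcongr
  linarith

lemma inner_sq_le (x z : Ed d) : ⟪x, z⟫ ^ 2 ≤ ‖x‖ ^ 2 * ‖z‖ ^ 2 := by
  rw [← mul_pow, ← sq_abs]
  exact pow_le_pow_left₀ (abs_nonneg _) (abs_real_inner_le_norm x z) 2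

lemma integrable_min_inner (hp : IsLevyPair d A ν) (x : Ed d) :
    Integrable (fun z : Ed d => min 1 (⟪x, z⟫ ^ 2)) ν := by
  refine (integrable_min_norm hp ‖x‖).mono' (by fun_prop) (ae_of_all _ fun z => ?_)
  rw [Real.norm_of_nonneg (by positivity)]
  exact min_le_min_left 1 (inner_sq_le x z)

lemma integrable_one_sub_cos (hp : IsLevyPair d A ν) (x : Ed d) :
    Integrable (fun z : Ed d => 1 - Real.cos ⟪x, z⟫) ν := by
  refine ((integrable_min_inner hp x).const_mul 2).mono' (by fun_prop) (ae_of_all _ fun z => ?_)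
  rw [Real.norm_of_nonneg (by linarith [Real.cos_le_one ⟪x, z⟫])]
  exact one_sub_cos_le _

/-- A Lévy measure is s-finite: it has a density with respect to the finite measure
`min(1,|z|²) ν(dz)`, because `ν({0}) = 0`. This is what Fubini's theorem needs. -/
lemma sfinite_of_levy (hp : IsLevyPair d A ν) : SFinite ν := by
  set f : Ed d → ℝ≥0∞ := fun z => ENNReal.ofReal (min 1 (‖z‖ ^ 2)) with hf
  have hmeas : Measurable f := by fun_prop
  have hne : ∀ᵐ z ∂ν, f z ≠ 0 := by
    refine measure_mono_null (fun z hz => ?_) hp.nu_zero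
    simp only [mem_compl_iff, mem_ofPred_eq, not_not, hf, ENNReal.ofReal_eq_zero] at hz
    by_contra hz0
    have : 0 < ‖z‖ := norm_pos_iff.2 hz0
    exact absurd hz (not_le.2 (by positivity))
  have hfin : IsFiniteMeasure (ν.withDensity f) :=
    isFiniteMeasure_withDensity hp.nu_int.lintegral_lt_top.ne
  rw [← withDensity_inv_same (μ := ν) hmeas hne (ae_of_all _ fun z => ENNReal.ofReal_ne_top)]
  infer_instance

/-! ### The quadratic part -/

lemma inner_map_self_le_norm (x : Ed d) : ⟪x, A x⟫ ≤ ‖A‖ * ‖x‖ ^ 2 := by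
  calc ⟪x, A x⟫ ≤ ‖x‖ * ‖A x‖ := real_inner_le_norm _ _
    _ ≤ ‖x‖ * (‖A‖ * ‖x‖) := by gcongr; exact A.le_opNorm x
    _ = _ := by ring

lemma cauchySchwarz_levy (hp : IsLevyPair d A ν) (x y : Ed d) :
    ⟪x, A y⟫ ^ 2 ≤ ⟪x, A x⟫ * ⟪y, A y⟫ := by
  have h := discrim_le_zero (a := ⟪y, A y⟫) (b := 2 * ⟪x, A y⟫) (c := ⟪x, A x⟫) fun t => by
    have := hp.nonneg (x + t • y)
    have hs : ⟪y, A x⟫ = ⟪x, A y⟫ := by rw [← hp.symm, real_inner_comm]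
    simp only [map_add, map_smul, inner_add_left, inner_add_right, real_inner_smul_left,
      real_inner_smul_right, hs] at this
    linarith
  unfold discrim at h
  linarith

lemma norm_map_sq_le (hp : IsLevyPair d A ν) (x : Ed d) : ‖A x‖ ^ 2 ≤ ‖A‖ * ⟪x, A x⟫ := by
  have h1 := cauchySchwarz_levy hp (A x) x
  have h2 := inner_map_self_le_norm (A := A) (A x)
  rw [real_inner_self_eq_norm_sq] at h1
  have h3 := hp.nonneg x
  rcases (sq_nonneg ‖A x‖).eq_or_lt with h | h
  · rw [← h]; positivity
  · have : ‖A x‖ ^ 2 * ‖A x‖ ^ 2 ≤ ‖A x‖ ^ 2 * (‖A‖ * ⟪x, A x⟫) := by nlinarith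
    exact le_of_mul_le_mul_left this h

/-- The operator norm of a non-negative symmetric operator is at most its trace. -/
lemma norm_le_trace (hp : IsLevyPair d A ν) :
    ‖A‖ ≤ ∑ i : Fin d, ⟪EuclideanSpace.single i (1 : ℝ), A (EuclideanSpace.single i 1)⟫ := by
  set tr := ∑ i : Fin d, ⟪EuclideanSpace.single i (1 : ℝ), A (EuclideanSpace.single i 1)⟫ with htr
  have htr0 : 0 ≤ tr := Finset.sum_nonneg fun i _ => hp.nonneg _
  have hb : ‖A‖ ≤ √(‖A‖ * tr) := by
    refine A.opNorm_le_bound (Real.sqrt_nonneg _) fun x => ?_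
    refine abs_le_of_sq_le_sq' ?_ (by positivity) |>.2
    rw [mul_pow, Real.sq_sqrt (by positivity)]
    have hx : x = ∑ i, x i • EuclideanSpace.single i (1 : ℝ) := by
      have := (EuclideanSpace.basisFun (Fin d) ℝ).sum_repr x
      simpa using this.symm
    have h1 : ‖A x‖ ≤ ∑ i, |x i| * ‖A (EuclideanSpace.single i 1)‖ := by
      conv_lhs => rw [hx, map_sum]
      refine (norm_sum_le _ _).trans (le_of_eq ?_)
      simp [norm_smul]
    calc ‖A x‖ ^ 2 ≤ (∑ i, |x i| * ‖A (EuclideanSpace.single i 1)‖) ^ 2 := by gcongr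
      _ ≤ (∑ i, |x i| ^ 2) * ∑ i, ‖A (EuclideanSpace.single i 1)‖ ^ 2 :=
        Finset.sum_mul_sq_le_sq_mul_sq _ _ _
      _ ≤ ‖x‖ ^ 2 * ∑ i : Fin d, ‖A‖ *
          ⟪EuclideanSpace.single i (1 : ℝ), A (EuclideanSpace.single i 1)⟫ := by
        rw [EuclideanSpace.norm_sq_eq]
        simp only [Real.norm_eq_abs]
        gcongr with i
        exact norm_map_sq_le hp _
      _ = ‖A‖ * tr * ‖x‖ ^ 2 := by rw [← Finset.mul_sum, mul_comm]
  have h2 : ‖A‖ ^ 2 ≤ ‖A‖ * tr := by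
    calc ‖A‖ ^ 2 ≤ √(‖A‖ * tr) ^ 2 := by gcongr
      _ = _ := Real.sq_sqrt (by positivity)
  rcases (norm_nonneg A).eq_or_lt with h | h
  · rw [← h]; exact htr0
  · exact le_of_mul_le_mul_left (by linarith) h

/-! ### Comparison of the exponent with concentration functions -/

lemma rePsi_nonneg (hp : IsLevyPair d A ν) (x : Ed d) : 0 ≤ rePsi d A ν x :=
  add_nonneg (hp.nonneg x) (integral_nonneg fun z => by
    simpa using Real.cos_le_one ⟪x, z⟫)

lemma rePsi_le_projConc (hp : IsLevyPair d A ν) (x : Ed d) :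
    rePsi d A ν x ≤ 2 * projConc d A ν x := by
  have h := integral_mono (integrable_one_sub_cos hp x) ((integrable_min_inner hp x).const_mul 2)
    fun z => one_sub_cos_le _
  rw [integral_const_mul] at h
  unfold rePsi projConc
  linarith [hp.nonneg x]

lemma projConc_le_concInv (hp : IsLevyPair d A ν) {x : Ed d} {ρ : ℝ} (hx : ‖x‖ ≤ ρ) :
    projConc d A ν x ≤ concInv d A ν ρ := by
  have hx2 : ‖x‖ ^ 2 ≤ ρ ^ 2 := by gcongr
  refine add_le_add ?_ ?_
  · exact (inner_map_self_le_norm x).trans (by gcongr)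
  · refine integral_mono (integrable_min_inner hp x) (integrable_min_norm hp ρ) fun z => ?_
    exact min_le_min_left 1 ((inner_sq_le x z).trans (by gcongr))

lemma rePsi_le_concInv (hp : IsLevyPair d A ν) {x : Ed d} {ρ : ℝ} (hx : ‖x‖ ≤ ρ) :
    rePsi d A ν x ≤ 2 * concInv d A ν ρ :=
  (rePsi_le_projConc hp x).trans (by linarith [projConc_le_concInv hp hx])

lemma rePsi_le_psiStar (hp : IsLevyPair d A ν) {x : Ed d} {ρ : ℝ} (hx : ‖x‖ ≤ ρ) :
    rePsi d A ν x ≤ psiStar d A ν ρ := by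
  refine le_csSup ⟨2 * concInv d A ν ρ, ?_⟩ ⟨x, by simpa using hx, rfl⟩
  rintro _ ⟨y, hy, rfl⟩
  exact rePsi_le_concInv hp (by simpa using hy)

lemma psiStar_le_concInv (hp : IsLevyPair d A ν) {ρ : ℝ} (hρ : 0 ≤ ρ) :
    psiStar d A ν ρ ≤ 2 * concInv d A ν ρ := by
  refine csSup_le ⟨_, 0, by simpa using hρ, rfl⟩ ?_
  rintro _ ⟨y, hy, rfl⟩
  exact rePsi_le_concInv hp (by simpa using hy)

lemma psiStar_nonneg (hp : IsLevyPair d A ν) {ρ : ℝ} (hρ : 0 ≤ ρ) : 0 ≤ psiStar d A ν ρ :=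
  (rePsi_nonneg hp 0).trans (rePsi_le_psiStar hp (by simpa using hρ))

/-- Averaging `Re ψ` over the segment from `0` to `x` bounds the projected concentration function
from above by the radial majorant. -/
lemma projConc_le_psiStar (hp : IsLevyPair d A ν) (x : Ed d) :
    projConc d A ν x ≤ 16 * psiStar d A ν ‖x‖ := by
  have := sfinite_of_levy hp
  have hP : ∀ s ∈ Icc (0 : ℝ) 1, ∫ z, (1 - Real.cos (s * ⟪x, z⟫)) ∂ν ≤ psiStar d A ν ‖x‖ := by
    intro s hs
    have h1 : rePsi d A ν (s • x) ≤ psiStar d A ν ‖x‖ := by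
      refine rePsi_le_psiStar hp ?_
      rw [norm_smul, Real.norm_of_nonneg hs.1]
      exact mul_le_of_le_one_left (norm_nonneg _) hs.2
    have h2 := hp.nonneg (s • x)
    unfold rePsi at h1
    simp only [real_inner_smul_left] at h1 h2
    linarith
  have hA : ⟪x, A x⟫ ≤ psiStar d A ν ‖x‖ := by
    refine le_trans ?_ (rePsi_le_psiStar hp le_rfl)
    exact le_add_of_nonneg_right (integral_nonneg fun z => by
      simpa using Real.cos_le_one ⟪x, z⟫)
  have : IsFiniteMeasure (volume.restrict (Set.uIoc (0 : ℝ) 1)) := by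
    rw [uIoc_of_le zero_le_one]
    infer_instance
  have hint : Integrable (Function.uncurry fun (s : ℝ) (z : Ed d) => 1 - Real.cos (s * ⟪x, z⟫))
      ((volume.restrict (Set.uIoc (0 : ℝ) 1)).prod ν) := by
    refine (((integrable_min_inner hp x).const_mul 2).comp_snd
      (volume.restrict (Set.uIoc (0 : ℝ) 1))).mono' (by fun_prop) ?_
    have hae : ∀ᵐ p : ℝ × Ed d ∂((volume.restrict (Set.uIoc (0 : ℝ) 1)).prod ν),
        p.1 ∈ Set.uIoc (0 : ℝ) 1 :=
      Measure.quasiMeasurePreserving_fst.ae (ae_restrict_mem measurableSet_uIoc)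
    filter_upwards [hae] with p hp1
    rw [uIoc_of_le zero_le_one] at hp1
    simp only [Function.uncurry]
    rw [Real.norm_of_nonneg (by linarith [Real.cos_le_one (p.1 * ⟪x, p.2⟫)])]
    refine (one_sub_cos_le _).trans ?_
    have : (p.1 * ⟪x, p.2⟫) ^ 2 ≤ ⟪x, p.2⟫ ^ 2 := by
      rw [mul_pow]
      exact mul_le_of_le_one_left (sq_nonneg _) (pow_le_one₀ hp1.1.le hp1.2)
    gcongr
  have hswap := intervalIntegral_integral_swap (μ := ν) hint
  have hle : ∫ s in (0 : ℝ)..1, ∫ z, (1 - Real.cos (s * ⟪x, z⟫)) ∂ν ≤ psiStar d A ν ‖x‖ := by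
    have := intervalIntegral.integral_mono_on (μ := volume) (zero_le_one (α := ℝ))
      (f := fun s => ∫ z, (1 - Real.cos (s * ⟪x, z⟫)) ∂ν) (g := fun _ => psiStar d A ν ‖x‖)
      (by
        rw [intervalIntegrable_iff]
        exact hint.integral_prod_left) (by simp) hP
    simpa using this
  have hinner : Integrable (fun z => ∫ s in (0 : ℝ)..1, (1 - Real.cos (s * ⟪x, z⟫))) ν := by
    have := hint.integral_prod_right
    simpa only [intervalIntegral.integral_of_le (zero_le_one (α := ℝ)),
      uIoc_of_le (zero_le_one (α := ℝ)), Function.uncurry] using this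
  have hmono := integral_mono (integrable_min_inner hp x) (hinner.const_mul 15)
    fun z => min_one_le_average _
  rw [integral_const_mul, ← hswap] at hmono
  unfold projConc
  linarith

lemma concInv_le_sum (hp : IsLevyPair d A ν) (ρ : ℝ) :
    concInv d A ν ρ ≤ ∑ i : Fin d, projConc d A ν (ρ • EuclideanSpace.single i (1 : ℝ)) := by
  simp only [projConc]
  rw [Finset.sum_add_distrib]
  refine add_le_add ?_ ?_
  · simp only [map_smul, real_inner_smul_left, real_inner_smul_right, ← Finset.mul_sum]
    have := mul_le_mul_of_nonneg_right (norm_le_trace hp) (sq_nonneg ρ)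
    linarith
  · rw [← integral_finsetSum _ fun i _ => integrable_min_inner hp _]
    refine integral_mono (integrable_min_norm hp ρ)
      (integrable_finsetSum _ fun i _ => integrable_min_inner hp _) fun z => ?_
    have h : ρ ^ 2 * ‖z‖ ^ 2 =
        ∑ i : Fin d, ⟪ρ • EuclideanSpace.single i (1 : ℝ), z⟫ ^ 2 := by
      rw [EuclideanSpace.norm_sq_eq, Finset.mul_sum]
      simp [real_inner_smul_left, mul_pow, EuclideanSpace.inner_single_left]
    simp only [h]
    exact min_one_sum_le _ _ fun i => sq_nonneg _

lemma concInv_le_psiStar (hp : IsLevyPair d A ν) {ρ : ℝ} (hρ : 0 ≤ ρ) :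
    concInv d A ν ρ ≤ 16 * d * psiStar d A ν ρ := by
  refine (concInv_le_sum hp ρ).trans ?_
  refine (Finset.sum_le_card_nsmul _ _ (16 * psiStar d A ν ρ) fun i _ => ?_).trans
    (le_of_eq ?_)
  · have := projConc_le_psiStar hp (ρ • EuclideanSpace.single i (1 : ℝ))
    simpa [norm_smul, abs_of_nonneg hρ] using this
  · simp; ring

/-- Zooming in by a factor `M` costs only a multiple of `Re ψ`: jumps with `|⟨x,z⟩| ≥ 1` already
have the maximal contribution `1` to the last term, and for the others `1 - cos ⟨x,z⟩` is comparable
with `⟨x,z⟩²`. -/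
lemma projConc_smul_le (hp : IsLevyPair d A ν) {M : ℝ} (hM : 1 ≤ M) (x : Ed d) :
    projConc d A ν (M • x) ≤ 5 * M ^ 2 * rePsi d A ν x + projConc d A ν x := by
  have h := integral_mono (integrable_min_inner hp (M • x))
    (((integrable_one_sub_cos hp x).const_mul (5 * M ^ 2)).add (integrable_min_inner hp x))
    fun z => by
      simp only [real_inner_smul_left, Pi.add_apply]
      exact min_one_scaled_le hM _
  rw [integral_add' ((integrable_one_sub_cos hp x).const_mul _) (integrable_min_inner hp x),
    integral_const_mul] at h
  unfold projConc rePsi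
  simp only [map_smul, real_inner_smul_left, real_inner_smul_right] at h ⊢
  have h0 := hp.nonneg x
  nlinarith [mul_nonneg (sq_nonneg M) h0]

end Levy

/-! ### The two implications -/

lemma one_div_lt_ofReal_inv {T : ℝ≥0∞} {r : ℝ} (hr : 0 < r) :
    1 / T < ENNReal.ofReal r⁻¹ ↔ ENNReal.ofReal r < T := by
  rw [one_div, ENNReal.ofReal_inv_of_pos hr, ENNReal.inv_lt_inv]

theorem stmt_14 (d : ℕ) (hd : 1 ≤ d) (A : Ed d →L[ℝ] Ed d) (ν : Measure (Ed d))
    (b : Ed d) (hpair : IsLevyPair d A ν) :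
    (∃ (T3 : ℝ≥0∞) (c3 α3 : ℝ), 0 < T3 ∧ 0 < c3 ∧ c3 ≤ 1 ∧ 0 < α3 ∧ α3 ≤ 2 ∧
        CondC3 d A ν T3 c3 α3) ↔
      (∃ (T8 : ℝ≥0∞) (c8 α8 : ℝ), 0 < T8 ∧ 1 ≤ c8 ∧ 0 < α8 ∧ α8 ≤ 2 ∧
        (∀ v : Ed d, ‖v‖ = 1 → ∀ r : ℝ, 0 < r → ENNReal.ofReal r < T8 →
          concFn d A ν r ≤
            c8 * (⟪v, A v⟫ / r ^ 2 + ∫ z, min 1 (⟪v, z⟫ ^ 2 / r ^ 2) ∂ν)) ∧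
        ScalA1 (concFn d A ν) α8 c8 T8) := by
  have hd' : (1 : ℝ) ≤ d := by exact_mod_cast hd
  simp only [projConc_smul]
  constructor
  · rintro ⟨T, c, α, hT, hc, hc1, hα, hα2, hC, hS⟩
    refine ⟨T, 32 * d / c, α, hT, ?_, hα, hα2, fun v hv r hr hrT => ?_,
      fun lam r hl hl1 hr hrT => ?_⟩
    · rw [one_le_div hc]; linarith
    · have hr' := inv_pos.2 hr
      have hn : ‖r⁻¹ • v‖ = r⁻¹ := by rw [norm_smul, hv, mul_one, Real.norm_of_nonneg hr'.le]
      have h1 := hC (r⁻¹ • v) (by rw [hn]; exact (one_div_lt_ofReal_inv hr).2 hrT)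
      rw [hn] at h1
      have h2 := rePsi_le_projConc hpair (r⁻¹ • v)
      have h3 := concInv_le_psiStar hpair hr'.le
      rw [concFn_eq_concInv, div_mul_eq_mul_div, le_div_iff₀ hc]
      calc concInv d A ν r⁻¹ * c ≤ 16 * d * psiStar d A ν r⁻¹ * c := by gcongr
        _ = 16 * d * (c * psiStar d A ν r⁻¹) := by ring
        _ ≤ 16 * d * (2 * projConc d A ν (r⁻¹ • v)) :=
          mul_le_mul_of_nonneg_left (h1.trans h2) (by positivity)
        _ = _ := by ring
    · have hr' := inv_pos.2 hr
      have h1 := hS lam⁻¹ r⁻¹ ((one_le_inv₀ hl).2 hl1) hr' ((one_div_lt_ofReal_inv hr).2 hrT)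
      have h3 := concInv_le_psiStar hpair hr'.le
      have h4 := psiStar_le_concInv hpair (ρ := lam⁻¹ * r⁻¹) (by positivity)
      have hlα : 0 < lam ^ α := Real.rpow_pos_of_pos hl _
      rw [Real.inv_rpow hl.le] at h1
      rw [concFn_eq_concInv, concFn_eq_concInv, mul_inv, div_mul_eq_mul_div, div_mul_eq_mul_div,
        le_div_iff₀ hc]
      calc concInv d A ν r⁻¹ * c ≤ 16 * d * psiStar d A ν r⁻¹ * c := by gcongr
        _ = 16 * d * lam ^ α * (c * (lam ^ α)⁻¹ * psiStar d A ν r⁻¹) := by field_simp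
        _ ≤ 16 * d * lam ^ α * (2 * concInv d A ν (lam⁻¹ * r⁻¹)) :=
          mul_le_mul_of_nonneg_left (h1.trans h4) (by positivity)
        _ = _ := by ring
  · rintro ⟨T, c, α, hT, hc, hα, hα2, hV, hS⟩
    have hc0 : 0 < c := by linarith
    -- `M` is chosen so that the scaling inequality along a line, used over the ratio `M`,
    -- has constant `c ^ 2 * M ^ (-α) = 1 / 2`.
    set M : ℝ := (2 * c ^ 2) ^ α⁻¹ with hMdef
    have hM : 1 ≤ M := Real.one_le_rpow (by nlinarith) (by positivity)
    have hM0 : 0 < M := by linarith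
    have hMα : M ^ α = 2 * c ^ 2 := by
      rw [hMdef, ← Real.rpow_mul (by positivity), inv_mul_cancel₀ hα.ne', Real.rpow_one]
    refine ⟨T, (32 * d * c * M ^ 2)⁻¹, α, hT, by positivity, ?_, hα, hα2, fun x hx => ?_,
      fun lam r hl hr hrT => ?_⟩
    · have : 1 ≤ c * M ^ 2 := one_le_mul_of_one_le_of_one_le hc (one_le_pow₀ hM)
      refine inv_le_one_of_one_le₀ ?_
      nlinarith
    · have hρ : 0 < ‖x‖ := ENNReal.ofReal_pos.1 (pos_of_gt hx)
      have hr : 0 < ‖x‖⁻¹ := inv_pos.2 hρ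
      have hrT : ENNReal.ofReal ‖x‖⁻¹ < T :=
        (one_div_lt_ofReal_inv hr).1 (by rwa [inv_inv])
      have hv : ‖‖x‖⁻¹ • x‖ = 1 := by
        rw [norm_smul, norm_inv, norm_norm, inv_mul_cancel₀ hρ.ne']
      have hrM : M⁻¹ * ‖x‖⁻¹ ≤ ‖x‖⁻¹ := mul_le_of_le_one_left hr.le (inv_le_one_of_one_le₀ hM)
      have h1 := hV _ hv _ hr hrT
      have h2 := hV _ hv (M⁻¹ * ‖x‖⁻¹) (by positivity)
        ((ENNReal.ofReal_le_ofReal hrM).trans_lt hrT)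
      have h3 := hS M⁻¹ ‖x‖⁻¹ (by positivity) (inv_le_one_of_one_le₀ hM) hr hrT
      have e1 : (‖x‖⁻¹)⁻¹ • ‖x‖⁻¹ • x = x := by
        rw [inv_inv, smul_inv_smul₀ hρ.ne']
      have e2 : (M⁻¹ * ‖x‖⁻¹)⁻¹ • ‖x‖⁻¹ • x = M • x := by
        rw [mul_inv, inv_inv, inv_inv, mul_smul, smul_inv_smul₀ hρ.ne']
      rw [e1, concFn_eq_concInv, inv_inv] at h1
      rw [e2] at h2
      rw [Real.inv_rpow hM0.le, hMα, concFn_eq_concInv, inv_inv] at h3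
      have h4 := projConc_le_concInv hpair (le_refl ‖x‖)
      have h5 := projConc_smul_le hpair hM x
      have h6 := psiStar_le_concInv hpair hρ.le
      have h7 := rePsi_nonneg hpair x
      have h8 : projConc d A ν x ≤ projConc d A ν (M • x) / 2 := by
        refine h4.trans (h3.trans ?_)
        calc c * (2 * c ^ 2)⁻¹ * concFn d A ν (M⁻¹ * ‖x‖⁻¹)
            ≤ c * (2 * c ^ 2)⁻¹ * (c * projConc d A ν (M • x)) := by gcongr
          _ = _ := by field_simp
      have h9 : projConc d A ν x ≤ 5 * M ^ 2 * rePsi d A ν x := by linarith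
      rw [inv_mul_le_iff₀ (by positivity)]
      calc psiStar d A ν ‖x‖ ≤ 2 * concInv d A ν ‖x‖ := h6
        _ ≤ 2 * (c * projConc d A ν x) := by gcongr
        _ ≤ 2 * (c * (5 * M ^ 2 * rePsi d A ν x)) := by gcongr
        _ = 10 * 1 * (c * M ^ 2 * rePsi d A ν x) := by ring
        _ ≤ 32 * d * (c * M ^ 2 * rePsi d A ν x) := by gcongr; norm_num
        _ = _ := by ring
    · have hl0 : 0 < lam := by linarith
      have h1 := hS lam⁻¹ r⁻¹ (by positivity) (inv_le_one_of_one_le₀ hl) (inv_pos.2 hr)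
        ((one_div_lt_ofReal_inv (inv_pos.2 hr)).1 (by rwa [inv_inv]))
      rw [concFn_eq_concInv, concFn_eq_concInv, mul_inv, inv_inv, inv_inv,
        Real.inv_rpow hl0.le] at h1
      have h2 := psiStar_le_concInv hpair hr.le
      have h3 := concInv_le_psiStar hpair (ρ := lam * r) (by positivity)
      have h4 := psiStar_nonneg hpair (ρ := lam * r) (by positivity)
      have hlα : 0 < lam ^ α := Real.rpow_pos_of_pos hl0 _
      rw [mul_assoc, inv_mul_le_iff₀ (by positivity)]
      calc lam ^ α * psiStar d A ν r
          ≤ lam ^ α * (2 * (c * (lam ^ α)⁻¹ * concInv d A ν (lam * r))) := by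
            gcongr; linarith
        _ = 2 * c * concInv d A ν (lam * r) := by field_simp
        _ ≤ 2 * c * (16 * d * psiStar d A ν (lam * r)) := by gcongr
        _ = 32 * d * c * 1 * psiStar d A ν (lam * r) := by ring
        _ ≤ 32 * d * c * M ^ 2 * psiStar d A ν (lam * r) := by
          gcongr; exact one_le_pow₀ hM

end
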